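/- arXiv:2104.11836 — 2 statements merged into one kernel-verified Lean document; each statement's English description precedes it below -/
import Mathlib

section
/- Let R be a standard graded algebra over a field K, let d > 0 be a degree, and let l_1,…,l_r be linear forms of R satisfying property (Gr,d). Then for every word o = o_1,…,o_i with 0 ≤ i < r and with j := |o|_c < d, setting I := I_{l,o}, one has dim_K (R/(I + (l_{i+1})))_{d−j} ≤ (dim_K (R/I)_{d−j})_{⟨d−j⟩}. -/
/-- Polynomial functions on a `K`-vector space `V`: the subalgebra of `V → K`
generated by the linear functionals. -/
def polyFuns (K V : Type*) [Field K] [AddCommGroup V] [Module K V] : Subalgebra K (V → K) :=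
  Algebra.adjoin K {f : V → K | ∃ φ : V →ₗ[K] K, ⇑φ = f}

/-- A subset of (the affine space of) a `K`-vector space is Zariski closed if it is the
common zero locus of a family of polynomial functions. -/
def IsZClosed (K : Type*) {V : Type*} [Field K] [AddCommGroup V] [Module K V]
    (Z : Set V) : Prop :=
  ∃ S : Set (V → K), (∀ f ∈ S, f ∈ polyFuns K V) ∧ Z = {v | ∀ f ∈ S, f v = 0}

/-- A subset is Zariski open if its complement is Zariski closed. -/
def IsZOpen (K : Type*) {V : Type*} [Field K] [AddCommGroup V] [Module K V]
    (U : Set V) : Prop :=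
  IsZClosed K Uᶜ

/-- An irreducible variety: a nonempty Zariski closed set which is not the union of two
proper closed subsets. -/
def IsIrredVariety (K : Type*) {V : Type*} [Field K] [AddCommGroup V] [Module K V]
    (W : Set V) : Prop :=
  IsZClosed K W ∧ W.Nonempty ∧
    ∀ Z₁ Z₂ : Set V, IsZClosed K Z₁ → IsZClosed K Z₂ → W ⊆ Z₁ ∪ Z₂ → (W ⊆ Z₁ ∨ W ⊆ Z₂)

/-- Auxiliary recursion for `wordIdeal`: letters are booleans, `true` standing for the
letter `c` (colon) and `false` for the letter `s` (sum). The natural number argument keeps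
track of which linear form is to be used next (0-indexed). -/
def wordIdealAux {R : Type*} [CommRing R] (l : ℕ → R) : ℕ → Ideal R → List Bool → Ideal R
  | _, I, [] => I
  | j, I, a :: o =>
      wordIdealAux l (j + 1)
        (if a then I.colon (Ideal.span {l j}) else I ⊔ Ideal.span {l j}) o

/-- The ideal `I_{l,o}` attached to a sequence of (linear) forms `l` and a word `o` in the
letters `{c, s}` (here `c = true`, `s = false`): starting from `(0)`, the `j`-th letter
either colons (`c`) or adds (`s`) the `j`-th form. -/
def wordIdeal {R : Type*} [CommRing R] (l : ℕ → R) (o : List Bool) : Ideal R :=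
  wordIdealAux l 0 ⊥ o

/-- The degree `d` component `I ∩ R_d` of an ideal `I`, as a `K`-subspace of `𝒜 d`. -/
def homComp {K R : Type*} [Field K] [CommRing R] [Algebra K R]
    (𝒜 : ℕ → Submodule K R) (I : Ideal R) (d : ℕ) : Submodule K (𝒜 d) :=
  Submodule.comap (𝒜 d).subtype (Submodule.restrictScalars K I)

/-- `dim_K (I)_d`, the dimension of the degree `d` component of the (homogeneous) ideal `I`. -/
noncomputable def homDim {K R : Type*} [Field K] [CommRing R] [Algebra K R]
    (𝒜 : ℕ → Submodule K R) (I : Ideal R) (d : ℕ) : ℕ :=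
  Module.finrank K (homComp 𝒜 I d)

/-- `dim_K (R/I)_d`, the dimension of the degree `d` component of `R/I` for a
(homogeneous) ideal `I`, computed as `dim 𝒜 d / (I ∩ 𝒜 d)`. -/
noncomputable def quotDim {K R : Type*} [Field K] [CommRing R] [Algebra K R]
    (𝒜 : ℕ → Submodule K R) (I : Ideal R) (d : ℕ) : ℕ :=
  Module.finrank K ((𝒜 d) ⧸ homComp 𝒜 I d)

/-- `macaulayDown c d = c_⟨d⟩`: if `c = C(k_d,d) + … + C(k_1,1)` is the `d`-th Macaulay
representation of `c`, then `c_⟨d⟩ = C(k_d - 1,d) + … + C(k_1 - 1,1)`; computed greedily. -/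
def macaulayDown : ℕ → ℕ → ℕ
  | _, 0 => 0
  | c, d + 1 =>
      let k := Nat.findGreatest (fun k => Nat.choose k (d + 1) ≤ c) (c + d + 1)
      Nat.choose (k - 1) (d + 1) + macaulayDown (c - Nat.choose k (d + 1)) d

/-- Property (Gr,d) for the linear forms `l 0, …, l (r-1)` (letters: `true = c`,
`false = s`): for every word `o` of length `i ≤ r`,
(1) if `m ⊄ I_o` and `i < r` then `l_{i+1} ∉ I_o`;
(2) if `i = r` and `|o|_c < d` then `m ⊆ I_o`;
(3) if `i ≤ r - 2` then `dim (I_{o,c,s})_{d - |o|_c - 1} ≤ dim (I_{o,s,c})_{d - |o|_c - 1}`. -/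
def GrProp {K R : Type*} [Field K] [CommRing R] [Algebra K R]
    (𝒜 : ℕ → Submodule K R) [GradedAlgebra 𝒜] (l : ℕ → R) (r d : ℕ) : Prop :=
  ∀ o : List Bool, o.length ≤ r →
    (¬ (HomogeneousIdeal.irrelevant 𝒜).toIdeal ≤ wordIdeal l o → o.length < r →
        l o.length ∉ wordIdeal l o) ∧
    (o.length = r → o.count true < d →
        (HomogeneousIdeal.irrelevant 𝒜).toIdeal ≤ wordIdeal l o) ∧
    (o.length + 2 ≤ r →
        homDim 𝒜 (wordIdeal l (o ++ [true, false])) (d - o.count true - 1) ≤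
          homDim 𝒜 (wordIdeal l (o ++ [false, true])) (d - o.count true - 1))

/-!
Induct on the number of forms not yet used by the word `o`. Put `I = I_o`, `x = l_{i+1}`,
`y = l_{i+2}`, `n = d - |o|_c`, `b = dim (R/(I + x))_n` and `c = dim (R/(I : x))_{n-1}`.
Multiplication by a linear form gives `dim (R/I)_n = b + c`, and likewise
`b = dim (R/(I + x + y))_n + dim (R/((I + x) : y))_{n-1}`. By (3) the last summand is at most
`dim (R/((I : x) + y))_{n-1}`, so the induction hypotheses for the words `o,s` and `o,c` yield
`b ≤ b_⟨n⟩ + c_⟨n-1⟩`. This forces `b ≤ (b + c)_⟨n⟩`, a purely numerical fact about Macaulay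
representations. Conditions (1) and (2) settle `n = 1` and the last form respectively.
-/

section MacaulayDown

lemma macaulayDown_le_self (a d : ℕ) : macaulayDown a d ≤ a := by
  induction d generalizing a with
  | zero => exact Nat.zero_le a
  | succ d ih =>
    rw [macaulayDown]
    set k := Nat.findGreatest (fun k => k.choose (d + 1) ≤ a) (a + d + 1)
    have hk : k.choose (d + 1) ≤ a :=
      Nat.findGreatest_spec (P := fun k => k.choose (d + 1) ≤ a) (Nat.zero_le _) (by simp)
    calc (k - 1).choose (d + 1) + macaulayDown (a - k.choose (d + 1)) d
        ≤ k.choose (d + 1) + (a - k.choose (d + 1)) :=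
          Nat.add_le_add (Nat.choose_le_choose _ (Nat.sub_le k 1)) (ih _)
      _ = a := Nat.add_sub_cancel' hk

@[simp]
lemma macaulayDown_zero_left (d : ℕ) : macaulayDown 0 d = 0 :=
  Nat.le_zero.mp (macaulayDown_le_self 0 d)

@[simp]
lemma macaulayDown_zero_right (a : ℕ) : macaulayDown a 0 = 0 := rfl

lemma le_choose_succ_add (n d : ℕ) : n ≤ n.choose (d + 1) + d := by
  induction n with
  | zero => exact Nat.zero_le _
  | succ n ih =>
    rcases lt_or_ge n d with hnd | hdn
    · omega
    · have hpos : 0 < n.choose d := Nat.choose_pos hdn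
      rw [Nat.choose_succ_succ']
      omega

lemma findGreatest_choose_le_eq {k d b : ℕ} (hb : b < k.choose d) :
    Nat.findGreatest (fun n => n.choose (d + 1) ≤ k.choose (d + 1) + b)
      (k.choose (d + 1) + b + d + 1) = k := by
  refine Nat.findGreatest_eq_iff.mpr ⟨?_, fun _ => Nat.le_add_right _ _, fun n hkn _ hle => ?_⟩
  · have := le_choose_succ_add k d
    omega
  · have hmono : (k + 1).choose (d + 1) ≤ n.choose (d + 1) := Nat.choose_le_choose _ hkn
    rw [Nat.choose_succ_succ'] at hmono
    omega

lemma macaulayDown_choose_add {k d b : ℕ} (hb : b < (k + 1).choose d) :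
    macaulayDown ((k + 1).choose (d + 1) + b) (d + 1) = k.choose (d + 1) + macaulayDown b d := by
  rw [macaulayDown]
  simp only [findGreatest_choose_le_eq hb, Nat.add_sub_cancel, Nat.add_sub_cancel_left]

lemma macaulayDown_choose {k d : ℕ} (hdk : d ≤ k + 1) :
    macaulayDown ((k + 1).choose (d + 1)) (d + 1) = k.choose (d + 1) := by
  simpa using macaulayDown_choose_add (Nat.choose_pos hdk)

lemma macaulayDown_choose_add_succ {k d b : ℕ} (hb : b + 1 = (k + 1).choose d) :
    macaulayDown ((k + 1).choose (d + 1) + b + 1) (d + 1) = (k + 1).choose (d + 1) := by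
  have hdk : d ≤ k + 1 := Nat.choose_ne_zero_iff.mp (by omega)
  have hpascal : (k + 1).choose (d + 1) + b + 1 = (k + 1 + 1).choose (d + 1) := by
    rw [Nat.choose_succ_succ' (k + 1)]
    omega
  rw [hpascal, macaulayDown_choose (by omega)]

lemma macaulayDown_one_right (a : ℕ) : macaulayDown a 1 = a - 1 := by
  cases a with
  | zero => simp
  | succ a => simpa using macaulayDown_choose (Nat.zero_le (a + 1))

lemma exists_eq_choose_add (d : ℕ) {a : ℕ} (ha : 0 < a) :
    ∃ k b, d ≤ k ∧ b < (k + 1).choose d ∧ a = (k + 1).choose (d + 1) + b := by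
  induction a, ha using Nat.le_induction with
  | base => exact ⟨d, 0, le_rfl, by simp, by simp⟩
  | succ a _ ih =>
    obtain ⟨k, b, hdk, hb, rfl⟩ := ih
    rcases Nat.lt_or_ge (b + 1) ((k + 1).choose d) with hlt | hge
    · exact ⟨k, b + 1, hdk, hlt, by omega⟩
    · refine ⟨k + 1, 0, by omega, Nat.choose_pos (by omega), ?_⟩
      rw [Nat.choose_succ_succ' (k + 1)]
      omega

lemma macaulayDown_lt_choose {a d k : ℕ} (hdk : d ≤ k) (ha : a < (k + 1).choose d) :
    macaulayDown a d < k.choose d := by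
  induction d generalizing a k with
  | zero => simp
  | succ d ih =>
    rcases Nat.eq_zero_or_pos a with rfl | hpos
    · simpa using Nat.choose_pos hdk
    obtain ⟨m, b, hdm, hb, rfl⟩ := exists_eq_choose_add d hpos
    have hmk : m + 1 ≤ k := by
      by_contra! hkm
      have : (k + 1).choose (d + 1) ≤ (m + 1).choose (d + 1) := Nat.choose_le_choose _ hkm
      omega
    calc macaulayDown ((m + 1).choose (d + 1) + b) (d + 1)
        = macaulayDown b d + m.choose (d + 1) := by rw [macaulayDown_choose_add hb, add_comm]
      _ < m.choose d + m.choose (d + 1) := Nat.add_lt_add_right (ih hdm hb) _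
      _ = (m + 1).choose (d + 1) := (Nat.choose_succ_succ' m d).symm
      _ ≤ k.choose (d + 1) := Nat.choose_le_choose _ hmk

lemma macaulayDown_mono (d : ℕ) : Monotone (macaulayDown · d) := by
  induction d with
  | zero => exact monotone_const
  | succ d ih =>
    refine monotone_nat_of_le_succ fun a => ?_
    rcases Nat.eq_zero_or_pos a with rfl | hpos
    · simp
    obtain ⟨k, b, hdk, hb, rfl⟩ := exists_eq_choose_add d hpos
    rcases Nat.lt_or_ge (b + 1) ((k + 1).choose d) with hlt | hge
    · rw [add_assoc, macaulayDown_choose_add hb, macaulayDown_choose_add hlt]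
      exact Nat.add_le_add_left (ih b.le_succ) _
    · have ha : (k + 1).choose (d + 1) + b < (k + 1 + 1).choose (d + 1) := by
        rw [Nat.choose_succ_succ' (k + 1)]
        omega
      rw [macaulayDown_choose_add_succ (by omega)]
      exact (macaulayDown_lt_choose (by omega) ha).le

lemma macaulayDown_succ_le (a d : ℕ) : macaulayDown (a + 1) d ≤ macaulayDown a d + 1 := by
  induction d generalizing a with
  | zero => simp
  | succ d ih =>
    rcases Nat.eq_zero_or_pos a with rfl | hpos
    · exact (macaulayDown_le_self 1 _).trans (Nat.le_add_left _ _)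
    obtain ⟨k, b, hdk, hb, rfl⟩ := exists_eq_choose_add d hpos
    rcases Nat.lt_or_ge (b + 1) ((k + 1).choose d) with hlt | hge
    · rw [add_assoc, macaulayDown_choose_add hb, macaulayDown_choose_add hlt, add_assoc]
      exact Nat.add_le_add_left (ih b) _
    · have hchoose : k.choose d ≤ macaulayDown b d + 1 := by
        cases d with
        | zero => simp
        | succ d =>
          rw [← macaulayDown_choose (by omega), show (k + 1).choose (d + 1) = b + 1 by omega]
          exact ih b
      rw [macaulayDown_choose_add_succ (by omega), macaulayDown_choose_add hb,
        Nat.choose_succ_succ']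
      omega

lemma macaulayDown_add_le (a n d : ℕ) : macaulayDown (a + n) d ≤ macaulayDown a d + n := by
  induction n with
  | zero => rfl
  | succ n ih => exact (macaulayDown_succ_le (a + n) d).trans (Nat.add_le_add_right ih 1)

lemma le_macaulayDown_add_choose {b d k : ℕ} (hdk : d ≤ k + 1) (hb : b ≤ k.choose (d + 1)) :
    b ≤ macaulayDown (b + k.choose d) (d + 1) := by
  have hlip := macaulayDown_add_le (b + k.choose d) (k.choose (d + 1) - b) (d + 1)
  have htop : b + k.choose d + (k.choose (d + 1) - b) = (k + 1).choose (d + 1) := by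
    rw [Nat.choose_succ_succ']
    omega
  rw [htop, macaulayDown_choose hdk] at hlip
  omega

lemma macaulayDown_add_macaulayDown_lt {b c d : ℕ} (h : macaulayDown (b + c) (d + 1) < b) :
    macaulayDown b (d + 1) + macaulayDown c d < b := by
  induction d generalizing b c with
  | zero =>
    rw [macaulayDown_zero_right, macaulayDown_one_right]
    omega
  | succ d ih =>
    obtain ⟨k, b', hdk, hb', rfl⟩ := exists_eq_choose_add (d + 1) (Nat.zero_lt_of_lt h)
    have pascal_b := Nat.choose_succ_succ' k (d + 1)
    have pascal_c := Nat.choose_succ_succ' (k + 1) d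
    have pascal_sum := Nat.choose_succ_succ' (k + 1) (d + 1)
    rw [macaulayDown_choose_add hb']
    -- Small `c` is bounded outright; for large `c` both `c` and `b + c` have a known leading
    -- binomial coefficient, whose removal leaves the same statement one degree lower.
    rcases Nat.lt_or_ge c ((k + 1).choose (d + 1)) with hc | hc
    · have hc_down := macaulayDown_lt_choose hdk hc
      have hb_down := macaulayDown_le_self b' (d + 1)
      omega
    · obtain ⟨c', rfl⟩ := Nat.exists_eq_add_of_le hc
      have hc' : c' < (k + 1).choose d := by
        by_contra! hle
        have hb_le : (k + 1).choose (d + 1 + 1) + b' ≤ macaulayDown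
            ((k + 1).choose (d + 1 + 1) + b' + (k + 1 + 1).choose (d + 1)) (d + 1 + 1) :=
          le_macaulayDown_add_choose (by omega) (by omega)
        exact h.not_ge (hb_le.trans (macaulayDown_mono _ (by omega)))
      have hsum : (k + 1).choose (d + 1 + 1) + b' + ((k + 1).choose (d + 1) + c') =
          (k + 1 + 1).choose (d + 1 + 1) + (b' + c') := by omega
      rw [hsum, macaulayDown_choose_add (by omega)] at h
      have hrem := ih (b := b') (c := c') (by omega)
      rw [macaulayDown_choose_add hc']
      omega

end MacaulayDown

section GradedComponents

lemma finrank_quotient_sup_range_add_finrank_quotient_comap {K V W : Type*} [DivisionRing K]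
    [AddCommGroup V] [Module K V] [AddCommGroup W] [Module K W] [FiniteDimensional K W]
    (φ : V →ₗ[K] W) (P : Submodule K W) :
    Module.finrank K (W ⧸ (P ⊔ LinearMap.range φ)) + Module.finrank K (V ⧸ P.comap φ) =
      Module.finrank K (W ⧸ P) := by
  have hker : LinearMap.ker (P.mkQ ∘ₗ φ) = P.comap φ := by
    rw [LinearMap.ker_comp, Submodule.ker_mkQ]
  rw [← hker, (P.mkQ ∘ₗ φ).quotKerEquivRange.finrank_eq, LinearMap.range_comp,
    ← (Submodule.quotientQuotientEquivQuotientSup P (LinearMap.range φ)).finrank_eq]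
  exact Submodule.finrank_quotient_add_finrank _

lemma isHomogeneous_colon_singleton {ι σ R : Type*} [CommRing R] [SetLike σ R]
    [AddSubmonoidClass σ R] [DecidableEq ι] [AddRightCancelMonoid ι] (𝒜 : ι → σ) [GradedRing 𝒜]
    {I : Ideal R} (hI : I.IsHomogeneous 𝒜) {i : ι} {y : R} (hy : y ∈ 𝒜 i) :
    (I.colon {y}).IsHomogeneous 𝒜 := by
  intro j x hx
  rw [Submodule.mem_colon_singleton, smul_eq_mul] at hx ⊢
  rw [← DirectSum.coe_decompose_mul_add_of_right_mem 𝒜 hy]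
  exact hI (j + i) hx

lemma isHomogeneous_sup_span_singleton {ι σ R : Type*} [CommRing R] [SetLike σ R]
    [AddSubmonoidClass σ R] [DecidableEq ι] [AddMonoid ι] (𝒜 : ι → σ) [GradedRing 𝒜]
    {I : Ideal R} (hI : I.IsHomogeneous 𝒜) {i : ι} {y : R} (hy : y ∈ 𝒜 i) :
    (I ⊔ Ideal.span {y}).IsHomogeneous 𝒜 :=
  hI.sup (Ideal.homogeneous_span 𝒜 {y} (by rintro _ rfl; exact ⟨i, hy⟩))

variable {K R : Type*} [Field K] [CommRing R] [Algebra K R] (𝒜 : ℕ → Submodule K R)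

lemma finiteDimensional_component_of_standard (h0 : 𝒜 0 = (1 : Submodule K R))
    (hstd : ∀ n, 𝒜 (n + 1) = 𝒜 1 * 𝒜 n) [FiniteDimensional K (𝒜 1)] (n : ℕ) :
    FiniteDimensional K (𝒜 n) := by
  rw [← Submodule.fg_iff_finiteDimensional]
  induction n with
  | zero =>
    rw [h0, Submodule.one_eq_span]
    exact Submodule.fg_span_singleton 1
  | succ n ih =>
    rw [hstd]
    exact ((Submodule.fg_iff_finiteDimensional _).mpr inferInstance).mul ih

lemma quotDim_add_homDim (I : Ideal R) (n : ℕ) [FiniteDimensional K (𝒜 n)] :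
    quotDim 𝒜 I n + homDim 𝒜 I n = Module.finrank K (𝒜 n) :=
  Submodule.finrank_quotient_add_finrank _

lemma quotDim_le_quotDim_of_homDim_le {I J : Ideal R} {n : ℕ} [FiniteDimensional K (𝒜 n)]
    (h : homDim 𝒜 I n ≤ homDim 𝒜 J n) : quotDim 𝒜 J n ≤ quotDim 𝒜 I n := by
  have hI := quotDim_add_homDim 𝒜 I n
  have hJ := quotDim_add_homDim 𝒜 J n
  omega

variable [GradedAlgebra 𝒜]

lemma quotDim_eq_zero_of_irrelevant_le {I : Ideal R}
    (hI : (HomogeneousIdeal.irrelevant 𝒜).toIdeal ≤ I) {n : ℕ} (hn : 0 < n) :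
    quotDim 𝒜 I n = 0 := by
  have htop : homComp 𝒜 I n = ⊤ :=
    eq_top_iff.mpr fun x _ => hI (HomogeneousIdeal.mem_irrelevant_of_mem 𝒜 hn x.2)
  rw [quotDim, htop]
  exact Module.finrank_zero_of_subsingleton

lemma quotDim_zero_pos [FiniteDimensional K (𝒜 0)] {I : Ideal R} (hI : I ≠ ⊤) :
    0 < quotDim 𝒜 I 0 := by
  rw [quotDim, Module.finrank_pos_iff, Submodule.Quotient.nontrivial_iff]
  intro htop
  have hone : (⟨1, SetLike.one_mem_graded 𝒜⟩ : 𝒜 0) ∈ homComp 𝒜 I 0 := htop ▸ trivial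
  exact hI ((Ideal.eq_top_iff_one I).mpr hone)

/-- Multiplication by a form `y` of degree `m`, as a map `R_n → R_{n+m}` of graded components.
Modulo a homogeneous ideal `I` its kernel is `((I : y)/I)_n` and its cokernel is
`(R/(I + (y)))_{n+m}`. The argument `hy` is what makes the map land in degree `n + m`. -/
def componentMulRight {m : ℕ} {y : R} (hy : y ∈ 𝒜 m) (n : ℕ) : 𝒜 n →ₗ[K] 𝒜 (n + m) :=
  (LinearMap.mulRight K y).restrict fun _ hx => SetLike.mul_mem_graded hx hy

variable {𝒜}

lemma homComp_colon_singleton {m : ℕ} {y : R} (hy : y ∈ 𝒜 m) (I : Ideal R) (n : ℕ) :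
    homComp 𝒜 (I.colon {y}) n =
      (homComp 𝒜 I (n + m)).comap (componentMulRight 𝒜 hy n) :=
  Submodule.ext fun _ => Submodule.mem_colon_singleton

lemma homComp_sup_span_singleton {I : Ideal R} (hI : I.IsHomogeneous 𝒜) {m : ℕ} {y : R}
    (hy : y ∈ 𝒜 m) (n : ℕ) :
    homComp 𝒜 (I ⊔ Ideal.span {y}) (n + m) =
      homComp 𝒜 I (n + m) ⊔ LinearMap.range (componentMulRight 𝒜 hy n) := by
  apply le_antisymm
  · rintro ⟨x, hx⟩ (hmem : x ∈ I ⊔ Ideal.span {y})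
    obtain ⟨i, hi, z, hz, rfl⟩ := Submodule.mem_sup.mp hmem
    obtain ⟨c, rfl⟩ := Ideal.mem_span_singleton'.mp hz
    refine Submodule.mem_sup.mpr ⟨DirectSum.decompose 𝒜 i (n + m), hI (n + m) hi,
      componentMulRight 𝒜 hy n (DirectSum.decompose 𝒜 c n), ⟨_, rfl⟩, Subtype.ext ?_⟩
    calc (DirectSum.decompose 𝒜 i (n + m) : R) + DirectSum.decompose 𝒜 c n * y
        = DirectSum.decompose 𝒜 (i + c * y) (n + m) := by
          rw [DirectSum.decompose_add, DirectSum.add_apply, Submodule.coe_add,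
            DirectSum.coe_decompose_mul_add_of_right_mem 𝒜 hy]
      _ = i + c * y := DirectSum.decompose_of_mem_same 𝒜 hx
  · refine sup_le (fun x hx => Ideal.mem_sup_left hx) ?_
    rintro _ ⟨x, rfl⟩
    exact Ideal.mem_sup_right (Ideal.mul_mem_left _ (x : R) (Ideal.mem_span_singleton_self y))

lemma quotDim_sup_add_quotDim_colon {I : Ideal R} (hI : I.IsHomogeneous 𝒜) {m : ℕ} {y : R}
    (hy : y ∈ 𝒜 m) (n : ℕ) [FiniteDimensional K (𝒜 (n + m))] :
    quotDim 𝒜 (I ⊔ Ideal.span {y}) (n + m) +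
      quotDim 𝒜 (I.colon {y}) n = quotDim 𝒜 I (n + m) := by
  rw [quotDim, quotDim, homComp_sup_span_singleton hI hy, homComp_colon_singleton hy]
  exact finrank_quotient_sup_range_add_finrank_quotient_comap _ _

end GradedComponents

section GreenInequality

variable {K R : Type*} [Field K] [CommRing R] [Algebra K R] {𝒜 : ℕ → Submodule K R}
  [GradedAlgebra 𝒜] [∀ n, FiniteDimensional K (𝒜 n)] {I : Ideal R} {x y : R}

lemma quotDim_sup_le_macaulayDown_of_degree_one (hI : I.IsHomogeneous 𝒜) (hx : x ∈ 𝒜 1)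
    (hxI : ¬ (HomogeneousIdeal.irrelevant 𝒜).toIdeal ≤ I → x ∉ I) :
    quotDim 𝒜 (I ⊔ Ideal.span {x}) 1 ≤ macaulayDown (quotDim 𝒜 I 1) 1 := by
  rw [macaulayDown_one_right]
  by_cases hirr : (HomogeneousIdeal.irrelevant 𝒜).toIdeal ≤ I
  · rw [quotDim_eq_zero_of_irrelevant_le 𝒜 (hirr.trans le_sup_left) one_pos]
    exact Nat.zero_le _
  · have hcolon : I.colon {x} ≠ ⊤ := fun htop => hxI hirr <| by
      simpa using Submodule.mem_colon_singleton.mp ((Ideal.eq_top_iff_one _).mp htop)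
    have hpos := quotDim_zero_pos 𝒜 hcolon
    have hexact := quotDim_sup_add_quotDim_colon hI hx 0
    rw [zero_add] at hexact
    omega

lemma quotDim_sup_le_macaulayDown_of_colon_of_sup (hI : I.IsHomogeneous 𝒜) (hx : x ∈ 𝒜 1)
    (hy : y ∈ 𝒜 1) {n : ℕ}
    (hcolon : quotDim 𝒜 (I.colon {x} ⊔ Ideal.span {y}) n ≤
      macaulayDown (quotDim 𝒜 (I.colon {x}) n) n)
    (hsup : quotDim 𝒜 (I ⊔ Ideal.span {x} ⊔ Ideal.span {y}) (n + 1) ≤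
      macaulayDown (quotDim 𝒜 (I ⊔ Ideal.span {x}) (n + 1)) (n + 1))
    (hdim : homDim 𝒜 (I.colon {x} ⊔ Ideal.span {y}) n ≤
      homDim 𝒜 ((I ⊔ Ideal.span {x}).colon {y}) n) :
    quotDim 𝒜 (I ⊔ Ideal.span {x}) (n + 1) ≤ macaulayDown (quotDim 𝒜 I (n + 1)) (n + 1) := by
  rw [← quotDim_sup_add_quotDim_colon hI hx n]
  -- Put `b = dim (R/(I + x))_{n+1}` and `c = dim (R/(I : x))_n`, so that `b + c = dim (R/I)_{n+1}`;
  -- it suffices that `b ≤ b_⟨n+1⟩ + c_⟨n⟩`.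
  refine not_lt.mp fun hlt => (macaulayDown_add_macaulayDown_lt hlt).not_ge ?_
  calc quotDim 𝒜 (I ⊔ Ideal.span {x}) (n + 1)
      = quotDim 𝒜 (I ⊔ Ideal.span {x} ⊔ Ideal.span {y}) (n + 1) +
          quotDim 𝒜 ((I ⊔ Ideal.span {x}).colon {y}) n :=
        (quotDim_sup_add_quotDim_colon (isHomogeneous_sup_span_singleton 𝒜 hI hx) hy n).symm
    _ ≤ macaulayDown (quotDim 𝒜 (I ⊔ Ideal.span {x}) (n + 1)) (n + 1) +
          macaulayDown (quotDim 𝒜 (I.colon {x}) n) n :=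
        Nat.add_le_add hsup ((quotDim_le_quotDim_of_homDim_le 𝒜 hdim).trans hcolon)

end GreenInequality

section WordIdeal

variable {R : Type*} [CommRing R]

lemma wordIdealAux_append (l : ℕ → R) (j : ℕ) (I : Ideal R) (o₁ o₂ : List Bool) :
    wordIdealAux l j I (o₁ ++ o₂) =
      wordIdealAux l (j + o₁.length) (wordIdealAux l j I o₁) o₂ := by
  induction o₁ generalizing j I with
  | nil => rfl
  | cons a o₁ ih =>
    rw [List.cons_append, wordIdealAux, ih, wordIdealAux, List.length_cons, add_assoc, add_comm 1]

lemma wordIdeal_append_true (l : ℕ → R) (o : List Bool) :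
    wordIdeal l (o ++ [true]) = (wordIdeal l o).colon {l o.length} := by
  simp [wordIdeal, wordIdealAux_append, wordIdealAux]

lemma wordIdeal_append_false (l : ℕ → R) (o : List Bool) :
    wordIdeal l (o ++ [false]) = wordIdeal l o ⊔ Ideal.span {l o.length} := by
  simp [wordIdeal, wordIdealAux_append, wordIdealAux]

variable {σ : Type*} [SetLike σ R] [AddSubmonoidClass σ R] (𝒜 : ℕ → σ) [GradedRing 𝒜]

lemma isHomogeneous_wordIdeal {l : ℕ → R} {o : List Bool}
    (hl : ∀ j < o.length, SetLike.IsHomogeneousElem 𝒜 (l j)) :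
    (wordIdeal l o).IsHomogeneous 𝒜 := by
  induction o using List.reverseRecOn with
  | nil => exact Ideal.IsHomogeneous.bot 𝒜
  | append_singleton o a ih =>
    rw [List.length_append, List.length_singleton] at hl
    have ho : (wordIdeal l o).IsHomogeneous 𝒜 := ih fun j hj => hl j (by omega)
    obtain ⟨i, hi⟩ := hl o.length (by omega)
    cases a with
    | false =>
      rw [wordIdeal_append_false]
      exact isHomogeneous_sup_span_singleton 𝒜 ho hi
    | true =>
      rw [wordIdeal_append_true]
      exact isHomogeneous_colon_singleton 𝒜 ho hi

end WordIdeal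

namespace GrProp

variable {K R : Type*} [Field K] [CommRing R] [Algebra K R] {𝒜 : ℕ → Submodule K R}
  [GradedAlgebra 𝒜] {l : ℕ → R} {r d : ℕ} {o : List Bool}

lemma quotDim_sup_eq_zero (hGr : GrProp 𝒜 l r d) (ho : o.length + 1 = r)
    (hcount : o.count true < d) {n : ℕ} (hn : 0 < n) :
    quotDim 𝒜 (wordIdeal l o ⊔ Ideal.span {l o.length}) n = 0 := by
  rw [← wordIdeal_append_false]
  refine quotDim_eq_zero_of_irrelevant_le 𝒜 ?_ hn
  exact (hGr (o ++ [false]) (by simp [ho])).2.1 (by simp [ho]) (by simpa using hcount)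

lemma homDim_colon_sup_le_homDim_sup_colon (hGr : GrProp 𝒜 l r d) (ho : o.length + 2 ≤ r) :
    homDim 𝒜 ((wordIdeal l o).colon {l o.length} ⊔ Ideal.span {l (o.length + 1)})
        (d - o.count true - 1) ≤
      homDim 𝒜 ((wordIdeal l o ⊔ Ideal.span {l o.length}).colon {l (o.length + 1)})
        (d - o.count true - 1) := by
  have h := (hGr o (by omega)).2.2 ho
  rwa [List.append_cons o true, List.append_cons o false, wordIdeal_append_false,
    wordIdeal_append_true, wordIdeal_append_true, wordIdeal_append_false, List.length_append,
    List.length_append] at h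

end GrProp

theorem claim_of_hyperplane_restriction_general
    {K R : Type*} [Field K] [CommRing R] [Algebra K R]
    (𝒜 : ℕ → Submodule K R) [GradedAlgebra 𝒜] [∀ n, FiniteDimensional K (𝒜 n)]
    (d r : ℕ) (l : ℕ → R) (hl : ∀ j < r, l j ∈ 𝒜 1) (hGr : GrProp 𝒜 l r d)
    (o : List Bool) (ho : o.length < r) (hcount : o.count true < d) :
    quotDim 𝒜 (wordIdeal l o ⊔ Ideal.span {l o.length}) (d - o.count true) ≤
      macaulayDown (quotDim 𝒜 (wordIdeal l o) (d - o.count true)) (d - o.count true) := by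
  induction hk : r - o.length generalizing o with
  | zero => omega
  | succ k ih =>
    have hI : (wordIdeal l o).IsHomogeneous 𝒜 :=
      isHomogeneous_wordIdeal 𝒜 fun j hj => ⟨1, hl j (hj.trans ho)⟩
    rcases Nat.eq_or_lt_of_le ho with hlast | hnext
    · rw [hGr.quotDim_sup_eq_zero hlast hcount (by omega)]
      exact Nat.zero_le _
    obtain ⟨_ | n, hn⟩ : ∃ n, d - o.count true = n + 1 := ⟨d - o.count true - 1, by omega⟩
    · rw [hn]
      exact quotDim_sup_le_macaulayDown_of_degree_one hI (hl _ ho)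
        fun hirr => (hGr o ho.le).1 hirr ho
    have hdim := hGr.homDim_colon_sup_le_homDim_sup_colon hnext
    have hcolon := ih (o ++ [true]) (by simpa using hnext) (by simp; omega) (by simp; omega)
    have hsup := ih (o ++ [false]) (by simpa using hnext) (by simpa using hcount) (by simp; omega)
    simp only [wordIdeal_append_true, wordIdeal_append_false, List.length_append,
      List.count_append, List.length_singleton, List.count_singleton_self, ← Nat.sub_sub, hn,
      Nat.add_sub_cancel] at hdim hcolon hsup
    rw [hn]
    exact quotDim_sup_le_macaulayDown_of_colon_of_sup hI (hl _ ho) (hl _ hnext) hcolon hsup hdim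

/-- **The Claim in the proof of the hyperplane restriction theorem.**  If the linear
forms `l 0, …, l (r-1)` of a standard graded algebra `R` satisfy property (Gr,d), then
for every word `o` of length `i < r` with `j := |o|_c < d`, setting `I := I_{l,o}`,
`dim_K (R/(I + (l_{i+1})))_{d-j} ≤ (dim_K (R/I)_{d-j})_⟨d-j⟩`. -/
theorem claim_of_hyperplane_restriction
    {K R : Type*} [Field K] [CommRing R] [Algebra K R]
    (𝒜 : ℕ → Submodule K R) [GradedAlgebra 𝒜]
    (h0 : 𝒜 0 = (1 : Submodule K R)) (hstd : ∀ n, 𝒜 (n + 1) = 𝒜 1 * 𝒜 n)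
    [FiniteDimensional K (𝒜 1)] (d r : ℕ) (hd : 0 < d)
    (l : ℕ → R) (hl : ∀ j < r, l j ∈ 𝒜 1)
    (hGr : GrProp 𝒜 l r d) :
    ∀ o : List Bool, o.length < r → o.count true < d →
      quotDim 𝒜 (wordIdeal l o ⊔ Ideal.span {l o.length}) (d - o.count true) ≤
        macaulayDown (quotDim 𝒜 (wordIdeal l o) (d - o.count true)) (d - o.count true) := by
  have := finiteDimensional_component_of_standard 𝒜 h0 hstd
  exact claim_of_hyperplane_restriction_general 𝒜 d r l hl hGr
end

section
/- (Eakin–Sathaye) Let (A,m) be a local ring with infinite residue field, let I be an ideal of A, and let i and p be positive integers such that I^i is finitely generated and the minimal number of generators v(I^i) satisfies v(I^i) < C(i+p, i). Then there exist elements h_1,…,h_p ∈ I such that I^i = (h_1,…,h_p)·I^{i−1}. -/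
/-!
Measure a submodule `X` modulo `J` by the length of `(X + J) / J`, and prove the statement modulo
an arbitrary `J`: if `V ^ i` has length less than `C(i + p, i)` modulo `J`, then
`V ^ i ⊆ (h₁, …, hₚ) V ^ (i - 1) + J` for some `hₖ ∈ V`. For `h ∈ V`, the length of `V ^ i` modulo
`J` is the length of `V ^ (i - 1)` modulo the colon `J : h` plus that of `V ^ i` modulo
`J + h V ^ (i - 1)`. By Pascal's rule one of two cases occurs. Either the second length is small for
some `h`, and `h` is adjoined to a `(p - 1)`-tuple for `J + h V ^ (i - 1)`; or the first is small
for every `h`, and induction on `i` yields a `p`-tuple for each colon `J : h`. Generating modulo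
`J : h` is an open condition on the tuple, so, the residue field being infinite, a single tuple
works for finitely many `h` with `V ^ i = ∑ h V ^ (i - 1)` modulo `J`; this tuple works for `J`.
Nakayama's lemma is applied with `J = m V ^ i`.
-/

open IsLocalRing LinearMap Polynomial

namespace EakinSathaye

section RelativeLength

variable {R M N : Type*} [Ring R] [AddCommGroup M] [Module R M] [AddCommGroup N] [Module R N]

/-- The length of `(X + J) / J`, realised as the image of `X` in the quotient by `J`, so that
`X` need not contain `J`. -/
noncomputable def relLength (J X : Submodule R M) : ℕ∞ :=
  Module.length R (X.map J.mkQ)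

lemma map_mkQ_le_map_mkQ_iff {J X Y : Submodule R M} :
    X.map J.mkQ ≤ Y.map J.mkQ ↔ X ≤ Y ⊔ J := by
  rw [Submodule.map_le_iff_le_comap, Submodule.comap_map_mkQ, sup_comm]

lemma relLength_eq_zero_iff {J X : Submodule R M} : relLength J X = 0 ↔ X ≤ J := by
  rw [relLength, Module.length_eq_zero_iff, Submodule.subsingleton_iff_eq_bot,
    ← le_ker_iff_map, Submodule.ker_mkQ]

lemma fg_map_mkQ_of_relLength_ne_top {J X : Submodule R M} (h : relLength J X ≠ ⊤) :
    (X.map J.mkQ).FG := by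
  have := (isFiniteLength_iff_isNoetherian_isArtinian.1 (Module.length_ne_top_iff.1 h)).1
  exact Module.Finite.iff_fg.1 inferInstance

lemma length_eq_length_ker_inf_add_length_map (f : M →ₗ[R] N) (X : Submodule R M) :
    Module.length R X = Module.length R ↥(ker f ⊓ X) + Module.length R (X.map f) := by
  refine Module.length_eq_add_of_exact (Submodule.inclusion inf_le_right) (f.submoduleMap X)
    (Submodule.inclusion_injective _) (f.submoduleMap_surjective X) ?_
  rw [exact_iff, Submodule.range_inclusion]
  ext x
  simp [Subtype.ext_iff]

lemma relLength_eq_add (J : Submodule R M) {X Y : Submodule R M} (hYX : Y ≤ X) :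
    relLength J X = relLength J Y + relLength (J ⊔ Y) X := by
  let π : M ⧸ J →ₗ[R] M ⧸ (J ⊔ Y) := Submodule.factor le_sup_left
  have hker : ker π = Y.map J.mkQ := by
    rw [Submodule.ker_mapQ, Submodule.comap_id, Submodule.map_sup, Submodule.mkQ_map_self,
      bot_sup_eq]
  have hmap : (X.map J.mkQ).map π = X.map (J ⊔ Y).mkQ := by
    rw [← Submodule.map_comp, Submodule.factor_comp_mk]
  rw [relLength, length_eq_length_ker_inf_add_length_map π, hker,
    inf_eq_left.2 (Submodule.map_mono hYX), hmap, relLength, relLength]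

lemma relLength_comap (f : M →ₗ[R] N) (J : Submodule R N) (X : Submodule R M) :
    relLength (J.comap f) X = relLength J (X.map f) := by
  let φ : M ⧸ J.comap f →ₗ[R] N ⧸ J := (J.comap f).mapQ J f le_rfl
  have hφ : Function.Injective φ := by
    rw [← ker_eq_bot, Submodule.ker_mapQ, Submodule.mkQ_map_self]
  have hmap : (X.map f).map J.mkQ = (X.map (J.comap f).mkQ).map φ := by
    rw [← Submodule.map_comp, ← Submodule.map_comp, Submodule.mapQ_mkQ]
  rw [relLength, relLength, hmap]
  exact (Submodule.equivMapOfInjective φ hφ _).length_eq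

lemma relLength_comap_lt {f : M →ₗ[R] N} {J X : Submodule R N} {Y : Submodule R M}
    (hYX : Y.map f ≤ X) {a b : ℕ∞} (hX : relLength J X < a + b)
    (hb : b ≤ relLength (J ⊔ Y.map f) X) : relLength (J.comap f) Y < a := by
  by_contra! ha
  rw [relLength_comap] at ha
  rw [relLength_eq_add J hYX] at hX
  exact hX.not_ge (add_le_add ha hb)

end RelativeLength

section LengthLeCard

variable {R M : Type*} [CommRing R] [AddCommGroup M] [Module R M] (m : Ideal R) [m.IsMaximal]

variable {m} in
lemma length_le_card_of_isTorsionBySet (hM : Module.IsTorsionBySet R M m) {ι : Type*} [Fintype ι]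
    {v : ι → M} (hv : Submodule.span R (Set.range v) = ⊤) :
    Module.length R M ≤ Fintype.card ι := by
  let _ := hM.module
  have hsurj : Function.Surjective (Fintype.linearCombination (R ⧸ m) v) := by
    rw [← range_eq_top, Fintype.range_linearCombination, eq_top_iff]
    exact fun x _ ↦ Submodule.span_le_restrictScalars R (R ⧸ m) _ (hv ▸ Submodule.mem_top)
  have : IsSimpleModule R (R ⧸ m) := isSimpleModule_iff_isCoatom.2 ‹m.IsMaximal›.out
  calc Module.length R M
      ≤ Module.length R (ι → R ⧸ m) :=
        Module.length_le_of_surjective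
          ((Fintype.linearCombination (R ⧸ m) v).restrictScalars R) hsurj
    _ = Fintype.card ι := by simp

lemma relLength_smul_span_le_card (G : Finset M) :
    relLength (m • Submodule.span R (G : Set M)) (Submodule.span R (G : Set M)) ≤ G.card := by
  set X := Submodule.span R (G : Set M)
  have htors : Module.IsTorsionBySet R (X.map (m • X).mkQ) m := by
    rintro ⟨_, x, hx, rfl⟩ ⟨r, hr⟩
    exact Subtype.ext ((Submodule.Quotient.mk_eq_zero _).2 (Submodule.smul_mem_smul hr hx))
  let v (g : G) : X.map (m • X).mkQ := ⟨(m • X).mkQ g, g, Submodule.subset_span g.2, rfl⟩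
  have hv : Submodule.span R (Set.range v) = ⊤ := by
    apply Submodule.map_injective_of_injective (Submodule.injective_subtype _)
    rw [Submodule.map_span, ← Set.range_comp, Submodule.map_subtype_top]
    refine Eq.trans ?_ (Submodule.map_span _ _).symm
    rw [Set.image_eq_range]
    rfl
  simpa [relLength] using length_le_card_of_isTorsionBySet htors hv

end LengthLeCard

section LocalRing

variable {R : Type*} [CommRing R] [IsLocalRing R]

lemma map_residue_ne_zero_of_isUnit_eval {q : R[X]} {t : R} (hq : IsUnit (q.eval t)) :
    q.map (residue R) ≠ 0 := by
  rw [← residue_ne_zero_iff_isUnit, ← eval_map_apply] at hq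
  exact fun h ↦ hq (by rw [h, eval_zero])

lemma exists_isUnit_eval_of_map_residue_ne_zero [Infinite (ResidueField R)] {q : R[X]}
    (hq : q.map (residue R) ≠ 0) : ∃ t, IsUnit (q.eval t) := by
  obtain ⟨s, hs⟩ : ∃ s, (q.map (residue R)).eval s ≠ 0 := by
    by_contra! h
    exact hq (Polynomial.funext (by simpa using h))
  obtain ⟨t, rfl⟩ := residue_surjective s
  exact ⟨t, by rwa [eval_map_apply, residue_ne_zero_iff_isUnit] at hs⟩

lemma exists_isUnit_eval_and_isUnit_eval [Infinite (ResidueField R)] {q r : R[X]} {x y : R}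
    (hq : IsUnit (q.eval x)) (hr : IsUnit (r.eval y)) :
    ∃ t, IsUnit (q.eval t) ∧ IsUnit (r.eval t) := by
  have hqr : (q * r).map (residue R) ≠ 0 := by
    rw [Polynomial.map_mul]
    exact mul_ne_zero (map_residue_ne_zero_of_isUnit_eval hq)
      (map_residue_ne_zero_of_isUnit_eval hr)
  simpa using exists_isUnit_eval_of_map_residue_ne_zero hqr

end LocalRing

section LineOpen

variable {R M : Type*} [CommRing R] [AddCommGroup M] [Module R M]

variable (R) in
/-- A substitute for Zariski openness of a subset `U` of a module that need not be finite free: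
on every line `t ↦ a + t • b` through a point `a` of `U`, membership in `U` is guaranteed wherever a
polynomial in `t`, invertible at `t = 0`, takes a unit value. -/
def IsLineOpen (U : Set M) : Prop :=
  ∀ a ∈ U, ∀ b : M, ∃ q : R[X], IsUnit (q.eval 0) ∧ ∀ t, IsUnit (q.eval t) → a + t • b ∈ U

namespace IsLineOpen

lemma univ : IsLineOpen R (Set.univ : Set M) :=
  fun _ _ _ ↦ ⟨1, by simp, fun _ _ ↦ Set.mem_univ _⟩

lemma inter {U V : Set M} (hU : IsLineOpen R U) (hV : IsLineOpen R V) :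
    IsLineOpen R (U ∩ V) := by
  intro a ha b
  obtain ⟨q, hq, hqU⟩ := hU a ha.1 b
  obtain ⟨r, hr, hrV⟩ := hV a ha.2 b
  refine ⟨q * r, by simpa using ⟨hq, hr⟩, fun t ht ↦ ?_⟩
  rw [eval_mul, IsUnit.mul_iff] at ht
  exact ⟨hqU t ht.1, hrV t ht.2⟩

variable [IsLocalRing R] [Infinite (ResidueField R)]

lemma inter_nonempty {U V : Set M} (hU : IsLineOpen R U) (hV : IsLineOpen R V)
    (hUne : U.Nonempty) (hVne : V.Nonempty) : (U ∩ V).Nonempty := by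
  obtain ⟨a, ha⟩ := hUne
  obtain ⟨b, hb⟩ := hVne
  obtain ⟨q, hq, hqU⟩ := hU a ha (b - a)
  obtain ⟨r, hr, hrV⟩ := hV b hb (a - b)
  have hr' : IsUnit ((r.comp (1 - X)).eval 1) := by simpa using hr
  obtain ⟨t, htq, htr⟩ := exists_isUnit_eval_and_isUnit_eval hq hr'
  have hline : a + t • (b - a) = b + (1 - t) • (a - b) := by module
  exact ⟨a + t • (b - a), hqU t htq, hline ▸ hrV (1 - t) (by simpa using htr)⟩

lemma biInter_nonempty {κ : Type*} {U : κ → Set M} {s : Finset κ}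
    (hU : ∀ k ∈ s, IsLineOpen R (U k)) (hne : ∀ k ∈ s, (U k).Nonempty) :
    (⋂ k ∈ s, U k).Nonempty := by
  classical
  suffices IsLineOpen R (⋂ k ∈ s, U k) ∧ (⋂ k ∈ s, U k).Nonempty from this.2
  induction s using Finset.induction_on with
  | empty => exact ⟨by simpa using univ, by simp⟩
  | insert k s _ ih =>
    rw [Finset.forall_mem_insert] at hU hne
    obtain ⟨hopen, hnonempty⟩ := ih hU.2 hne.2
    rw [Finset.set_biInter_insert]
    exact ⟨hU.1.inter hopen, hU.1.inter_nonempty hopen hne.1 hnonempty⟩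

end IsLineOpen

lemma exists_polynomial_isUnit_one_add_smul {n : Type*} [Fintype n] [DecidableEq n]
    (T : Matrix n n R) :
    ∃ q : R[X], IsUnit (q.eval 0) ∧ ∀ t, IsUnit (q.eval t) → IsUnit (1 + t • T) := by
  have heval (t : R) : (1 + (X : R[X]) • T.map C).det.eval t = (1 + t • T).det := by
    simp [eval_det, ← Matrix.smul_eq_mul_diagonal]
  refine ⟨(1 + (X : R[X]) • T.map C).det, by simp [heval], fun t ht ↦ ?_⟩
  rwa [Matrix.isUnit_iff_isUnit_det, ← heval]

lemma exists_comp_eq_of_range_le {R M N P : Type*} [Ring R] [AddCommGroup M] [Module R M]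
    [AddCommGroup N] [Module R N] [AddCommGroup P] [Module R P] [Module.Projective R P]
    {f : M →ₗ[R] N} {g : P →ₗ[R] N} (h : range g ≤ range f) : ∃ s : P →ₗ[R] M, f ∘ₗ s = g := by
  obtain ⟨s, hs⟩ := Module.projective_lifting_property f.rangeRestrict
    (g.codRestrict (range f) fun x ↦ h ⟨x, rfl⟩) f.surjective_rangeRestrict
  exact ⟨s, LinearMap.ext fun x ↦ congrArg Subtype.val (LinearMap.congr_fun hs x)⟩

lemma isLineOpen_setOf_le_range {P Q : Type*} [AddCommGroup P] [Module R P] [AddCommGroup Q]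
    [Module R Q] {f : M →ₗ[R] P →ₗ[R] Q} {N : Submodule R Q} (hN : N.FG)
    (hf : ∀ a, range (f a) ≤ N) : IsLineOpen R {a | N ≤ range (f a)} := by
  -- Write `N` as the image of `π : Rᵈ → Q`. Lifting `π` along `f a` to `s` and `f b ∘ s` along `π`
  -- to `T` gives `f (a + t b) ∘ s = π ∘ (1 + t T)`, which has image `N` if `1 + t T` is invertible.
  intro a ha b
  obtain ⟨d, π, rfl⟩ := (Submodule.fg_iff_exists_fin_linearMap R Q).1 hN
  obtain ⟨s, hs⟩ := exists_comp_eq_of_range_le ha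
  obtain ⟨T, hT⟩ := exists_comp_eq_of_range_le ((range_comp_le_range s (f b)).trans (hf b))
  obtain ⟨q, hq, hqunit⟩ := exists_polynomial_isUnit_one_add_smul T.toMatrix'
  refine ⟨q, hq, fun t ht ↦ ?_⟩
  have hcomp : f (a + t • b) ∘ₗ s = π ∘ₗ (1 + t • T) := by
    rw [map_add, map_smul, LinearMap.add_comp, LinearMap.smul_comp, hs, ← hT,
      LinearMap.comp_add, LinearMap.comp_smul]
    rfl
  have hunit : IsUnit (1 + t • T) := by
    rw [← isUnit_toMatrix'_iff]
    simpa using hqunit t ht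
  have htop : range (1 + t • T) = ⊤ := range_eq_top.2 ((Module.End.isUnit_iff _).1 hunit).surjective
  calc range π = range (π ∘ₗ (1 + t • T)) := (range_comp_of_range_eq_top π htop).symm
    _ = range (f (a + t • b) ∘ₗ s) := by rw [hcomp]
    _ ≤ range (f (a + t • b)) := range_comp_le_range _ _

end LineOpen

section GeneratingTuples

variable {R S : Type*} [CommRing R] [CommRing S] [Algebra R S] {ι : Type*}

lemma mul_eq_iSup_map_mulLeft (X Y : Submodule R S) :
    X * Y = ⨆ x : X, Y.map (mulLeft R (x : S)) := by
  rw [Submodule.mul_eq_map₂]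
  rfl

lemma map_mulLeft_le_mul {V : Submodule R S} (h : V) (Y : Submodule R S) :
    Y.map (mulLeft R (h : S)) ≤ V * Y := by
  rw [mul_eq_iSup_map_mulLeft]
  exact le_iSup (fun x : V ↦ Y.map (mulLeft R (x : S))) h

lemma exists_finset_mul_le_iSup_sup {J X Y : Submodule R S} (hfg : ((X * Y).map J.mkQ).FG) :
    ∃ s : Finset X, X * Y ≤ (⨆ x ∈ s, Y.map (mulLeft R (x : S))) ⊔ J := by
  have hle : (X * Y).map J.mkQ ≤ ⨆ x : X, (Y.map (mulLeft R (x : S))).map J.mkQ := by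
    rw [← Submodule.map_iSup, mul_eq_iSup_map_mulLeft]
  obtain ⟨s, hs⟩ := CompleteLattice.IsCompactElement.exists_finset_of_le_iSup _
    ((Submodule.fg_iff_compact _).1 hfg) _ hle
  exact ⟨s, map_mkQ_le_map_mkQ_iff.1 (by simpa only [Submodule.map_iSup] using hs)⟩

variable (ι) in
/-- The tuples `a` of elements of `V` that generate `X` from `Y` modulo `J`, in the sense that
`X ⊆ (a₁, …, aₚ) Y + J`. They are tuples in the subtype `V`, so that this is a subset of an
`R`-module to which `IsLineOpen` applies. -/
def generatingTuples (V Y X J : Submodule R S) : Set (ι → V) :=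
  {a | X ≤ Submodule.span R (Set.range fun k ↦ (a k : S)) * Y ⊔ J}

lemma span_range_coe_le (V : Submodule R S) (a : ι → V) :
    Submodule.span R (Set.range fun k ↦ (a k : S)) ≤ V :=
  Submodule.span_le.2 (Set.range_subset_iff.2 fun k ↦ (a k).2)

lemma range_dotProductBilin_compl₁₂ [Fintype ι] (V Y : Submodule R S) (a : ι → V) :
    range ((dotProductBilin R R).compl₁₂ (V.subtype.compLeft ι) (Y.subtype.compLeft ι) a) =
      Submodule.span R (Set.range fun k ↦ (a k : S)) * Y := by
  classical
  apply le_antisymm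
  · rintro _ ⟨y, rfl⟩
    exact Submodule.sum_mem _ fun k _ ↦
      Submodule.mul_mem_mul (Submodule.subset_span ⟨k, rfl⟩) (y k).2
  · rw [Submodule.span_range_eq_iSup, Submodule.iSup_mul]
    refine iSup_le fun k x hx ↦ ?_
    obtain ⟨y, hy, rfl⟩ := Submodule.mem_span_singleton_mul.1 hx
    exact ⟨Pi.single k ⟨y, hy⟩, by simp [dotProduct, Pi.single_apply, apply_ite]⟩

lemma isLineOpen_generatingTuples [Finite ι] {V Y X J : Submodule R S} (hVY : V * Y ≤ X)
    (hfg : (X.map J.mkQ).FG) : IsLineOpen R (generatingTuples ι V Y X J) := by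
  have := Fintype.ofFinite ι
  let f := ((dotProductBilin R R).compl₁₂ (V.subtype.compLeft ι)
    (Y.subtype.compLeft ι)).compr₂ J.mkQ
  have hrange (a : ι → V) :
      range (f a) = (Submodule.span R (Set.range fun k ↦ (a k : S)) * Y).map J.mkQ := by
    rw [← range_dotProductBilin_compl₁₂, ← range_comp]
    rfl
  have hle (a : ι → V) : range (f a) ≤ X.map J.mkQ := by
    rw [hrange]
    exact Submodule.map_mono ((mul_le_mul_left (span_range_coe_le V a) Y).trans hVY)
  have hset : generatingTuples ι V Y X J = {a | X.map J.mkQ ≤ range (f a)} := by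
    ext a
    rw [Set.mem_ofPred_eq, hrange, map_mkQ_le_map_mkQ_iff]
    rfl
  exact hset ▸ isLineOpen_setOf_le_range hfg hle

lemma generatingTuples_nonempty_of_relLength_lt_one {V Y X J : Submodule R S}
    (h : relLength J X < 1) : (generatingTuples ι V Y X J).Nonempty :=
  ⟨0, (relLength_eq_zero_iff.1 (Order.lt_one_iff.1 h)).trans le_sup_right⟩

lemma cons_mem_generatingTuples {p : ℕ} {V Y X J : Submodule R S} {h : V} {a : Fin p → V}
    (ha : a ∈ generatingTuples (Fin p) V Y X (J ⊔ Y.map (mulLeft R (h : S)))) :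
    Fin.cons h a ∈ generatingTuples (Fin (p + 1)) V Y X J := by
  let c : Fin (p + 1) → V := Fin.cons h a
  have hmem : (h : S) ∈ Submodule.span R (Set.range fun k ↦ (c k : S)) :=
    Submodule.subset_span ⟨0, rfl⟩
  have hh : Y.map (mulLeft R (h : S)) ≤ Submodule.span R (Set.range fun k ↦ (c k : S)) * Y :=
    map_mulLeft_le_mul ⟨(h : S), hmem⟩ Y
  have hspan : Submodule.span R (Set.range fun k ↦ (a k : S)) ≤
      Submodule.span R (Set.range fun k ↦ (c k : S)) :=
    Submodule.span_mono (Set.range_subset_iff.2 fun k ↦ ⟨k.succ, rfl⟩)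
  exact ha.trans (sup_le (le_sup_of_le_left (mul_le_mul_left hspan Y))
    (sup_le le_sup_right (le_sup_of_le_left hh)))

lemma mem_generatingTuples_map_mulLeft {V Y Z J : Submodule R S} (hVY : V * Y ≤ Z) {h : V}
    {a : ι → V} (ha : a ∈ generatingTuples ι V Y Z (J.comap (mulLeft R (h : S)))) :
    a ∈ generatingTuples ι V Z (Z.map (mulLeft R (h : S))) J := by
  refine (Submodule.map_mono ha).trans ?_
  rw [Submodule.map_sup]
  refine sup_le_sup ?_ (Submodule.map_comap_le _ _)
  calc (Submodule.span R (Set.range fun k ↦ (a k : S)) * Y).map (mulLeft R (h : S))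
      ≤ V * (Submodule.span R (Set.range fun k ↦ (a k : S)) * Y) := map_mulLeft_le_mul h _
    _ = Submodule.span R (Set.range fun k ↦ (a k : S)) * (V * Y) := mul_left_comm _ _ _
    _ ≤ Submodule.span R (Set.range fun k ↦ (a k : S)) * Z := mul_le_mul_right hVY _

variable [IsLocalRing R] [Infinite (ResidueField R)]

lemma generatingTuples_nonempty_of_forall_comap [Finite ι] {V Y Z J : Submodule R S}
    (hVY : V * Y ≤ Z) (hfg : ((V * Z).map J.mkQ).FG)
    (hfin : ∀ h : V, relLength (J.comap (mulLeft R (h : S))) Z ≠ ⊤)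
    (hne : ∀ h : V, (generatingTuples ι V Y Z (J.comap (mulLeft R (h : S)))).Nonempty) :
    (generatingTuples ι V Z (V * Z) J).Nonempty := by
  obtain ⟨s, hs⟩ := exists_finset_mul_le_iSup_sup hfg
  obtain ⟨a, ha⟩ := IsLineOpen.biInter_nonempty (s := s)
    (fun h _ ↦ isLineOpen_generatingTuples hVY (fg_map_mkQ_of_relLength_ne_top (hfin h)))
    (fun h _ ↦ hne h)
  rw [Set.mem_iInter₂] at ha
  exact ⟨a, hs.trans (sup_le
    (iSup₂_le fun h hh ↦ mem_generatingTuples_map_mulLeft hVY (ha h hh)) le_sup_right)⟩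

lemma generatingTuples_succ_nonempty {p : ℕ} {V Y Z J : Submodule R S} (hVY : V * Y ≤ Z)
    {a b : ℕ} (hJ : relLength J (V * Z) < (a + b : ℕ))
    (hsup : ∀ J', relLength J' (V * Z) < b → (generatingTuples (Fin p) V Z (V * Z) J').Nonempty)
    (hcomap : ∀ J', relLength J' Z < a → (generatingTuples (Fin (p + 1)) V Y Z J').Nonempty) :
    (generatingTuples (Fin (p + 1)) V Z (V * Z) J).Nonempty := by
  by_cases hsmall : ∃ h : V, relLength (J ⊔ Z.map (mulLeft R (h : S))) (V * Z) < b
  · obtain ⟨h, hh⟩ := hsmall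
    obtain ⟨c, hc⟩ := hsup _ hh
    exact ⟨Fin.cons h c, cons_mem_generatingTuples hc⟩
  · push Not at hsmall
    have hlt (h : V) : relLength (J.comap (mulLeft R (h : S))) Z < a :=
      relLength_comap_lt (map_mulLeft_le_mul h Z) (by exact_mod_cast hJ) (hsmall h)
    exact generatingTuples_nonempty_of_forall_comap hVY
      (fg_map_mkQ_of_relLength_ne_top (ne_top_of_lt hJ)) (fun h ↦ ne_top_of_lt (hlt h))
      (fun h ↦ hcomap _ (hlt h))

lemma generatingTuples_mul_nonempty {V Y Z : Submodule R S} (hVY : V * Y ≤ Z) {i : ℕ}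
    (hZ : ∀ (p : ℕ) (J : Submodule R S), relLength J Z < (i + p).choose i →
      (generatingTuples (Fin p) V Y Z J).Nonempty)
    (p : ℕ) (J : Submodule R S) (hJ : relLength J (V * Z) < (i + 1 + p).choose (i + 1)) :
    (generatingTuples (Fin p) V Z (V * Z) J).Nonempty := by
  induction p generalizing J with
  | zero => exact generatingTuples_nonempty_of_relLength_lt_one (by simpa using hJ)
  | succ p ih =>
    have hpascal : (i + 1 + (p + 1)).choose (i + 1) =
        (i + (p + 1)).choose i + (i + 1 + p).choose (i + 1) := by
      rw [← add_assoc, Nat.choose_succ_succ, add_right_comm, add_assoc]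
    exact generatingTuples_succ_nonempty hVY (hpascal ▸ hJ) ih (hZ (p + 1))

theorem generatingTuples_pow_succ_nonempty (V : Submodule R S) (n p : ℕ) (J : Submodule R S)
    (hJ : relLength J (V ^ (n + 1)) < (n + 1 + p).choose (n + 1)) :
    (generatingTuples (Fin p) V (V ^ n) (V ^ (n + 1)) J).Nonempty := by
  induction n generalizing p J with
  | zero =>
    rw [pow_succ'] at hJ ⊢
    -- `⊥` plays the role of `V ^ (-1)`.
    refine generatingTuples_mul_nonempty (Y := ⊥) (i := 0) (by simp) (fun q J' hJ' ↦ ?_) p J hJ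
    exact generatingTuples_nonempty_of_relLength_lt_one (by simpa using hJ')
  | succ n ih =>
    rw [pow_succ' V (n + 1)] at hJ ⊢
    exact generatingTuples_mul_nonempty (pow_succ' V n).ge ih p J hJ

end GeneratingTuples

end EakinSathaye

open EakinSathaye in
theorem eakin_sathaye_general {R S : Type*} [CommRing R] [IsLocalRing R]
    [Infinite (ResidueField R)] [CommRing S] [Algebra R S] (V : Submodule R S) (n p : ℕ)
    (hv : ∃ G : Finset S, Submodule.span R (G : Set S) = V ^ (n + 1) ∧
      G.card < (n + 1 + p).choose (n + 1)) :
    ∃ h : Fin p → S, (∀ t, h t ∈ V) ∧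
      V ^ (n + 1) = Submodule.span R (Set.range h) * V ^ n := by
  obtain ⟨G, hG, hcard⟩ := hv
  have hlength : relLength (maximalIdeal R • V ^ (n + 1)) (V ^ (n + 1)) <
      (n + 1 + p).choose (n + 1) :=
    hG ▸ (relLength_smul_span_le_card (maximalIdeal R) G).trans_lt (by exact_mod_cast hcard)
  obtain ⟨a, ha⟩ := generatingTuples_pow_succ_nonempty V n p _ hlength
  refine ⟨fun k ↦ a k, fun k ↦ (a k).2, le_antisymm ?_ ?_⟩
  · exact Submodule.le_of_le_smul_of_le_jacobson_bot ⟨G, hG⟩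
      (jacobson_eq_maximalIdeal ⊥ bot_ne_top).ge ha
  · rw [pow_succ']
    exact mul_le_mul_left (span_range_coe_le V a) _

/-- **Eakin–Sathaye theorem.**  Let `(A,m)` be a local ring with infinite residue field,
`I` an ideal, and `i, p` positive integers.  If `I^i` is finitely generated with minimal
number of generators `< C(i+p, i)` (equivalently, `I^i` admits a generating set of
cardinality `< C(i+p, i)`), then there are `h_1, …, h_p ∈ I` with
`I^i = (h_1, …, h_p)·I^{i-1}`. -/
theorem eakin_sathaye
    {A : Type*} [CommRing A] [IsLocalRing A]
    [Infinite (IsLocalRing.ResidueField A)]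
    (I : Ideal A) (i p : ℕ) (hi : 0 < i) (hp : 0 < p)
    (hv : ∃ G : Finset A, Ideal.span (G : Set A) = I ^ i ∧ G.card < (i + p).choose i) :
    ∃ h : Fin p → A, (∀ t, h t ∈ I) ∧
      I ^ i = Ideal.span (Set.range h) * I ^ (i - 1) := by
  obtain ⟨n, rfl⟩ := Nat.exists_eq_add_one_of_ne_zero hi.ne'
  exact eakin_sathaye_general I n p hv
end
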